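/- arXiv:1504.04250 — 2 statements merged into one kernel-verified Lean document; each statement's English description precedes it below -/
import Mathlib

section
/- Let Y be a metric space and let T be a weighted tree equipped with its path metric. Then qc_Y(T) = c_Y(T). In particular, if Z ⊆ Y and f : Z → T is a Lipschitz quotient map, then there exists a bi-Lipschitz embedding g : T → Y with dist(g) ≤ codist(f). -/
open Set Function Filter

open scoped ENNReal

attribute [local instance] Classical.propDecidable

noncomputable section

def LipUB {α β : Type*} (dα : α → α → ℝ) (dβ : β → β → ℝ) (f : α → β) (L : ℝ) : Prop :=
  ∀ a b : α, dβ (f a) (f b) ≤ L * dα a b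

def CoLipUB {α β : Type*} (dα : α → α → ℝ) (dβ : β → β → ℝ) (f : α → β) (C : ℝ) : Prop :=
  ∀ a b : α, dα a b ≤ C * dβ (f a) (f b)

def IsBiLipEmb {α β : Type*} (dα : α → α → ℝ) (dβ : β → β → ℝ) (f : α → β) : Prop :=
  Function.Injective f ∧ ∃ L C : ℝ, LipUB dα dβ f L ∧ CoLipUB dα dβ f C

def distortionSet (α β : Type*) (dα : α → α → ℝ) (dβ : β → β → ℝ) : Set ℝ :=
  {D | ∃ f : α → β, Function.Injective f ∧ ∃ L C : ℝ,
    LipUB dα dβ f L ∧ CoLipUB dα dβ f C ∧ D = L * C}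

def cDist (α β : Type*) (dα : α → α → ℝ) (dβ : β → β → ℝ) : ℝ≥0∞ :=
  ⨅ D ∈ distortionSet α β dα dβ, ENNReal.ofReal D
def LipQuotientWith {α β : Type*} (dα : α → α → ℝ) (dβ : β → β → ℝ) (f : α → β)
    (L C : ℝ) : Prop :=
  Function.Surjective f ∧
  (∀ (x a : α) (r : ℝ), 0 < r → dα x a ≤ r → dβ (f x) (f a) ≤ L * r) ∧
  (∀ (x : α) (y : β) (r : ℝ), 0 < r → dβ (f x) y ≤ r / C → ∃ a : α, dα x a ≤ r ∧ f a = y)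

def qcSet (X : Type*) [PseudoMetricSpace X] (β : Type*) (dβ : β → β → ℝ) : Set ℝ :=
  {q | ∃ (Z : Set X) (f : Z → β) (L C : ℝ), 0 < L ∧ 0 < C ∧
    LipQuotientWith (fun a b : Z => dist a.1 b.1) dβ f L C ∧ q = L * C}

def qcDist (X : Type*) [PseudoMetricSpace X] (β : Type*) (dβ : β → β → ℝ) : ℝ≥0∞ :=
  ⨅ q ∈ qcSet X β dβ, ENNReal.ofReal q
structure RootedWTree (V : Type*) where
  root : V
  parent : V → V
  w : V → ℝ
  parent_root : parent root = root
  reach : ∀ v : V, ∃ n : ℕ, parent^[n] v = root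
  w_pos : ∀ v : V, v ≠ root → 0 < w v

namespace RootedWTree

variable {V : Type*} (T : RootedWTree V)

def up (v : V) (n : ℕ) : V := T.parent^[n] v

def Anc (u v : V) : Prop := ∃ n : ℕ, T.up v n = u

lemma exists_anc (x y : V) : ∃ n : ℕ, T.Anc (T.up x n) y := by
  obtain ⟨n, hn⟩ := T.reach x
  obtain ⟨m, hm⟩ := T.reach y
  exact ⟨n, m, by simp only [up]; rw [hm, hn]⟩

def climb (x y : V) : ℕ := Nat.find (T.exists_anc x y)

def rho (x y : V) : ℝ :=
  (∑ k ∈ Finset.range (T.climb x y), T.w (T.up x k)) +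
  (∑ k ∈ Finset.range (T.climb y x), T.w (T.up y k))

def pathEdges (x y : V) : List V :=
  ((List.range (T.climb x y)).map (fun k => T.up x k)) ++
  ((List.range (T.climb y x)).map (fun k => T.up y k))

def MonotoneClass {C : Type*} (χ : V → C) (c : C) : Prop :=
  (∀ u v : V, u ≠ T.root → v ≠ T.root → χ u = c → χ v = c → T.Anc u v ∨ T.Anc v u) ∧
  (∀ (v : V) (n : ℕ), v ≠ T.root → χ v = c → T.up v n ≠ T.root → χ (T.up v n) = c →
    ∀ k ≤ n, χ (T.up v k) = c)

def IsMonotoneColoring {C : Type*} (χ : V → C) : Prop := ∀ c : C, T.MonotoneClass χ c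

def IsBranch (P : Set V) : Prop := IsMaxChain (fun u v => T.Anc u v) P

def IsCaterpillar {C : Type*} (χ : V → C) (κ : ℕ) : Prop :=
  T.IsMonotoneColoring χ ∧
  ∀ P : Set V, T.IsBranch P → ∃ s : Finset C, s.card ≤ κ ∧ ∀ v ∈ P, v ≠ T.root → χ v ∈ s

def colorLen {C : Type*} (χ : V → C) (c : C) (x y : V) : ℝ :=
  (((T.pathEdges x y).filter (fun e => decide (χ e = c))).map T.w).sum

def IsStrong {C : Type*} (χ : V → C) (δ : ℝ) : Prop :=
  T.IsMonotoneColoring χ ∧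
  ∀ x y : V, x ≠ y →
    T.rho x y / 2 ≤
      (((T.pathEdges x y).filter
        (fun e => decide (δ * T.rho x y ≤ T.colorLen χ (χ e) x y))).map T.w).sum

end RootedWTree

namespace RootedWTree

variable {V : Type*} (T : RootedWTree V)

lemma up_add (v : V) (m n : ℕ) : T.up v (m + n) = T.up (T.up v m) n := by
  simp only [up]
  rw [Nat.add_comm, Function.iterate_add_apply]

lemma up_zero (v : V) : T.up v 0 = v := rfl

lemma up_succ (v : V) (n : ℕ) : T.up v (n + 1) = T.up (T.parent v) n := rfl

lemma up_succ' (v : V) (n : ℕ) : T.up v (n + 1) = T.parent (T.up v n) := by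
  simp only [up]
  rw [Function.iterate_succ_apply']

lemma up_root (n : ℕ) : T.up T.root n = T.root := by
  induction n with
  | zero => rfl
  | succ n ih => rw [up_succ, T.parent_root, ih]

lemma eq_root_of_periodic (v : V) (n : ℕ) (h : T.up v (n + 1) = v) : v = T.root := by
  obtain ⟨N, hN⟩ := T.reach v
  have hk : ∀ k : ℕ, T.up v (k * (n + 1)) = v := by
    intro k
    induction k with
    | zero => simp [up_zero]
    | succ k ih => rw [Nat.succ_mul, up_add, ih, h]
  have h1 : N * (n + 1) = N + N * n := by ring
  have h2 := hk N
  have hN' : T.up v N = T.root := hN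
  rw [h1, up_add, hN', up_root] at h2
  exact h2.symm

lemma anc_antisymm (p q : V) (h1 : T.Anc p q) (h2 : T.Anc q p) : p = q := by
  obtain ⟨i, hi⟩ := h1
  obtain ⟨j, hj⟩ := h2
  cases j with
  | zero => exact hj
  | succ j =>
    have h3 : T.up p (j + i + 1) = p := by
      have : j + i + 1 = (j + 1) + i := by ring
      rw [this, up_add, hj, hi]
    have h4 := T.eq_root_of_periodic p _ h3
    rw [h4, up_root] at hj
    rw [h4, hj]

lemma climb_spec (x y : V) : T.Anc (T.up x (T.climb x y)) y :=
  Nat.find_spec (T.exists_anc x y)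

lemma climb_le (x y : V) (n : ℕ) (h : T.Anc (T.up x n) y) : T.climb x y ≤ n :=
  Nat.find_min' (T.exists_anc x y) h

lemma up_anc_up (x : V) (m n : ℕ) (h : m ≤ n) : T.Anc (T.up x n) (T.up x m) := by
  refine ⟨n - m, ?_⟩
  rw [← up_add, Nat.add_sub_cancel' h]

lemma meet_anc (x y : V) :
    T.Anc (T.up x (T.climb x y)) (T.up y (T.climb y x)) := by
  obtain ⟨m, hm⟩ := T.climb_spec x y
  have h : T.climb y x ≤ m := T.climb_le y x m ⟨T.climb x y, hm.symm⟩
  rw [← hm]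
  exact T.up_anc_up y _ _ h

lemma meet_eq (x y : V) : T.up x (T.climb x y) = T.up y (T.climb y x) :=
  T.anc_antisymm _ _ (T.meet_anc x y) (T.meet_anc y x)

lemma ne_root_of_lt_climb (x y : V) (k : ℕ) (h : k < T.climb x y) : T.up x k ≠ T.root := by
  intro h0
  obtain ⟨N, hN⟩ := T.reach y
  have := T.climb_le x y k ⟨N, by rw [h0]; exact hN⟩
  omega

lemma climb_self (x : V) : T.climb x x = 0 :=
  Nat.le_zero.mp (T.climb_le x x 0 ⟨0, rfl⟩)

lemma rho_self (x : V) : T.rho x x = 0 := by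
  simp [rho, climb_self]

lemma half_nonneg (x y : V) : 0 ≤ ∑ k ∈ Finset.range (T.climb x y), T.w (T.up x k) :=
  Finset.sum_nonneg fun k hk =>
    (T.w_pos _ (T.ne_root_of_lt_climb x y k (Finset.mem_range.mp hk))).le

lemma half_pos (x y : V) (h : T.climb x y ≠ 0) :
    0 < ∑ k ∈ Finset.range (T.climb x y), T.w (T.up x k) :=
  Finset.sum_pos (fun k hk =>
    (T.w_pos _ (T.ne_root_of_lt_climb x y k (Finset.mem_range.mp hk))))
    (Finset.nonempty_range_iff.mpr h)

lemma rho_pos (x y : V) (h : x ≠ y) : 0 < T.rho x y := by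
  by_cases h1 : T.climb x y = 0
  · by_cases h2 : T.climb y x = 0
    · have := T.meet_eq x y
      rw [h1, h2, up_zero, up_zero] at this
      exact absurd this h
    · exact add_pos_of_nonneg_of_pos (T.half_nonneg x y) (T.half_pos y x h2)
  · exact add_pos_of_pos_of_nonneg (T.half_pos x y h1) (T.half_nonneg y x)

lemma rho_comm (x y : V) : T.rho x y = T.rho y x := add_comm _ _

lemma rho_parent (v : V) (h : v ≠ T.root) : T.rho (T.parent v) v = T.w v := by
  have h1 : T.climb (T.parent v) v = 0 :=
    Nat.le_zero.mp (T.climb_le _ _ 0 ⟨1, rfl⟩)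
  have h2 : T.climb v (T.parent v) ≤ 1 := T.climb_le _ _ 1 ⟨0, rfl⟩
  have h3 : T.climb v (T.parent v) ≠ 0 := by
    intro h0
    obtain ⟨n, hn⟩ := T.climb_spec v (T.parent v)
    rw [h0, up_zero, ← up_succ] at hn
    exact h (T.eq_root_of_periodic v n hn)
  have h4 : T.climb v (T.parent v) = 1 := by omega
  simp [rho, h1, h4, up_zero]

def depth (v : V) : ℕ := Nat.find (T.reach v)

lemma depth_parent (v : V) (h : v ≠ T.root) : T.depth v = T.depth (T.parent v) + 1 := by
  have hs : T.up v (T.depth v) = T.root := Nat.find_spec (T.reach v)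
  have hp : T.up (T.parent v) (T.depth (T.parent v)) = T.root :=
    Nat.find_spec (T.reach (T.parent v))
  apply le_antisymm
  · exact Nat.find_min' (T.reach v) hp
  · cases hd : T.depth v with
    | zero =>
      rw [hd] at hs
      exact absurd hs h
    | succ n =>
      rw [hd] at hs
      exact Nat.succ_le_succ (Nat.find_min' (T.reach (T.parent v)) hs)

/-- Recursive construction of a lift along the tree. -/
def lift {Z : Type*} (s : Z → V → Z) (z : Z) : ℕ → V → Z
  | 0, _ => z
  | n + 1, v => s (lift s z n (T.parent v)) v

lemma exists_lift {Z : Type*} (s : Z → V → Z) (z : Z) :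
    ∃ g : V → Z, g T.root = z ∧ ∀ v, v ≠ T.root → g v = s (g (T.parent v)) v := by
  refine ⟨fun v => T.lift s z (T.depth v) v, ?_, ?_⟩
  · have : T.depth T.root = 0 := Nat.le_zero.mp (Nat.find_min' (T.reach T.root) rfl)
    simp only [this, lift]
  · intro v hv
    simp only [T.depth_parent v hv, lift]

lemma induct (P : V → Prop) (h0 : P T.root)
    (h1 : ∀ v, v ≠ T.root → P (T.parent v) → P v) (v : V) : P v := by
  obtain ⟨n, hn⟩ := T.reach v
  induction n generalizing v with
  | zero =>
    have : v = T.root := hn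
    rw [this]
    exact h0
  | succ n ih =>
    by_cases hv : v = T.root
    · rw [hv]
      exact h0
    · exact h1 v hv (ih (T.parent v) hn)

lemma exists_embedding {Y : Type*} [MetricSpace Y] (Z : Set Y) (f : Z → V) (L C : ℝ)
    (hC : 0 < C)
    (hf : LipQuotientWith (fun a b : Z => dist a.1 b.1) T.rho f L C) :
    ∃ g : V → Y, Function.Injective g ∧
      LipUB T.rho (fun a b : Y => dist a b) g C ∧
      CoLipUB T.rho (fun a b : Y => dist a b) g L := by
  obtain ⟨hsurj, hlip, hco⟩ := hf
  obtain ⟨z0, hz0⟩ := hsurj T.root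
  have hs : ∀ (z : Z) (v : V), ∃ a : Z, v ≠ T.root → f z = T.parent v →
      dist z.1 a.1 ≤ C * T.w v ∧ f a = v := by
    intro z v
    by_cases h : v ≠ T.root ∧ f z = T.parent v
    · obtain ⟨a, ha, hb⟩ := hco z v (C * T.w v) (mul_pos hC (T.w_pos v h.1)) (by
        rw [h.2, T.rho_parent v h.1, mul_div_cancel_left₀ _ hC.ne'])
      exact ⟨a, fun _ _ => ⟨ha, hb⟩⟩
    · exact ⟨z, fun h1 h2 => absurd ⟨h1, h2⟩ h⟩
  choose s hs using hs
  obtain ⟨g, hg0, hg1⟩ := T.exists_lift s z0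
  have hfg : ∀ v, f (g v) = v := by
    apply T.induct
    · rw [hg0, hz0]
    · intro v hv ih
      rw [hg1 v hv]
      exact (hs _ v hv ih).2
  have hstep : ∀ v, v ≠ T.root → dist (g v).1 (g (T.parent v)).1 ≤ C * T.w v := by
    intro v hv
    have := (hs (g (T.parent v)) v hv (hfg _)).1
    rw [← hg1 v hv] at this
    rw [dist_comm]
    exact this
  have hpath : ∀ (x : V) (n : ℕ), (∀ k < n, T.up x k ≠ T.root) →
      dist (g x).1 (g (T.up x n)).1 ≤ C * ∑ k ∈ Finset.range n, T.w (T.up x k) := by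
    intro x n
    induction n with
    | zero => intro _; simp [up_zero]
    | succ n ih =>
      intro h
      have h1 := ih (fun k hk => h k (by omega))
      have h2 := hstep (T.up x n) (h n (by omega))
      rw [← up_succ'] at h2
      rw [Finset.sum_range_succ, mul_add]
      exact (dist_triangle _ _ _).trans (add_le_add h1 h2)
  have hinj : Function.Injective (fun v => (g v).1) := by
    intro a b hab
    have : g a = g b := Subtype.ext hab
    rw [← hfg a, ← hfg b, this]
  refine ⟨fun v => (g v).1, hinj, ?_, ?_⟩
  · intro x y
    have h1 := hpath x _ (T.ne_root_of_lt_climb x y)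
    have h2 := hpath y _ (T.ne_root_of_lt_climb y x)
    rw [← T.meet_eq x y, dist_comm] at h2
    simp only [rho]
    rw [mul_add]
    exact (dist_triangle _ _ _).trans (add_le_add h1 h2)
  · intro x y
    by_cases hxy : x = y
    · subst hxy
      simp [rho_self]
    · have hd : 0 < dist (g x).1 (g y).1 := dist_pos.mpr (fun h => hxy (hinj h))
      have := hlip (g x) (g y) _ hd le_rfl
      rw [hfg, hfg] at this
      exact this

lemma quotient_of_embedding {Y : Type*} [MetricSpace Y] (g : V → Y) (L C : ℝ)
    (hL : 0 < L) (hC : 0 < C) (hg : Function.Injective g)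
    (h1 : LipUB T.rho (fun a b : Y => dist a b) g L)
    (h2 : CoLipUB T.rho (fun a b : Y => dist a b) g C) :
    L * C ∈ qcSet Y V T.rho := by
  have hex : ∀ z : Set.range g, ∃ v, g v = z.1 := fun z => z.2
  choose f hf using hex
  have hfg : ∀ v, f ⟨g v, v, rfl⟩ = v := fun v => hg (hf _)
  refine ⟨Set.range g, f, C, L, hC, hL, ⟨?_, ?_, ?_⟩, mul_comm _ _⟩
  · exact fun v => ⟨_, hfg v⟩
  · intro x a r _ h
    have := h2 (f x) (f a)
    simp only [hf] at this
    exact this.trans (mul_le_mul_of_nonneg_left h hC.le)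
  · intro x y r _ h
    refine ⟨⟨g y, y, rfl⟩, ?_, hfg y⟩
    have := h1 (f x) y
    simp only [hf] at this
    rw [le_div_iff₀ hL] at h
    show dist x.1 (g y) ≤ r
    linarith

end RootedWTree

/-- Proposition 4.3: for a weighted tree `T` (with path metric `ρ`)
and a metric space `Y`, `qc_Y(T) = c_Y(T)`; moreover from any Lipschitz quotient
map `f : Z → T`, `Z ⊆ Y`, with constants `L, C` one gets a bi-Lipschitz embedding
`g : T → Y` with `Lip(g) ≤ C` and `Lip(g⁻¹) ≤ L`, so `dist(g) ≤ codist(f)`. -/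
theorem tree_qc_eq_c
    {V : Type*} (Y : Type*) [MetricSpace Y] (T : RootedWTree V) :
    qcDist Y V T.rho = cDist V Y T.rho (fun a b : Y => dist a b) ∧
    (∀ (Z : Set Y) (f : Z → V) (L C : ℝ), 0 < L → 0 < C →
      LipQuotientWith (fun a b : Z => dist a.1 b.1) T.rho f L C →
      ∃ g : V → Y, Function.Injective g ∧
        LipUB T.rho (fun a b : Y => dist a b) g C ∧
        CoLipUB T.rho (fun a b : Y => dist a b) g L) := by
  have key : ∀ (Z : Set Y) (f : Z → V) (L C : ℝ), 0 < L → 0 < C →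
      LipQuotientWith (fun a b : Z => dist a.1 b.1) T.rho f L C →
      ∃ g : V → Y, Function.Injective g ∧
        LipUB T.rho (fun a b : Y => dist a b) g C ∧
        CoLipUB T.rho (fun a b : Y => dist a b) g L :=
    fun Z f L C _ hC hf => T.exists_embedding Z f L C hC hf
  refine ⟨le_antisymm ?_ ?_, key⟩
  · refine le_iInf₂ ?_
    rintro D ⟨g, hg, L, C, h1, h2, rfl⟩
    by_cases hV : ∃ x : V, x ≠ T.root
    · obtain ⟨x, hx⟩ := hV
      have hr := T.rho_pos x T.root hx
      have hd : 0 < dist (g x) (g T.root) := dist_pos.mpr (fun h => hx (hg h))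
      have hL : 0 < L := by
        have := h1 x T.root
        exact pos_of_mul_pos_left (hd.trans_le this) hr.le
      have hC : 0 < C := by
        have := h2 x T.root
        exact pos_of_mul_pos_left (hr.trans_le this) hd.le
      exact iInf₂_le _ (T.quotient_of_embedding g L C hL hC hg h1 h2)
    · push Not at hV
      refine le_trans ?_ zero_le
      have hrho : ∀ x y, T.rho x y = 0 := by
        intro x y
        rw [hV x, hV y, T.rho_self]
      refine ENNReal.le_of_forall_pos_le_add ?_
      intro ε hε _
      have hm : (ε : ℝ) * 1 ∈ qcSet Y V T.rho := by
        refine T.quotient_of_embedding g ε 1 hε one_pos hg ?_ ?_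
        · intro a b
          rw [hV a, hV b]
          simp [T.rho_self]
        · intro a b
          rw [hV a, hV b]
          simp [T.rho_self]
      refine (iInf₂_le _ hm).trans ?_
      simp
  · refine le_iInf₂ ?_
    rintro q ⟨Z, f, L, C, hL, hC, hf, rfl⟩
    obtain ⟨g, hg, h1, h2⟩ := key Z f L C hL hC hf
    exact iInf₂_le _ ⟨g, hg, C, L, h1, h2, mul_comm _ _⟩

end
end

section
/- Let p ∈ (1,∞) and let X be a real Banach space admitting an equivalent norm with property (β_p) with some constant γ > 0. Suppose a Banach space Y is a coarse quotient (with some constant K ≥ 0) of a subset of X via a map that is Lipschitz for large distances. Then for every q ∈ (p,∞), ℓ_q is not a coarse quotient of a subset of Y via a map that is Lipschitz for large distances. -/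
open Set Function Filter

open scoped ENNReal

attribute [local instance] Classical.propDecidable

noncomputable section

def rolewiczSetN {Y : Type*} [AddCommGroup Y] (N : Y → ℝ) (t : ℝ) : Set ℝ :=
  {s | ∃ x : Y, N x ≤ 1 ∧ ∃ y : ℕ → Y, (∀ i, N (y i) ≤ 1) ∧
    (∀ n m : ℕ, n ≠ m → t ≤ N (y n - y m)) ∧ s = ⨅ i, N (x - y i) / 2}

def rolewiczModN {Y : Type*} [AddCommGroup Y] (N : Y → ℝ) (t : ℝ) : ℝ :=
  1 - sSup (rolewiczSetN N t)

def IsEquivNorm (Y : Type*) [SeminormedAddCommGroup Y] [NormedSpace ℝ Y] (N : Y → ℝ) : Prop :=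
  (∀ x y : Y, N (x + y) ≤ N x + N y) ∧ (∀ (c : ℝ) (x : Y), N (c • x) = |c| * N x) ∧
  ∃ a b : ℝ, 0 < a ∧ a ≤ b ∧ ∀ y : Y, a * ‖y‖ ≤ N y ∧ N y ≤ b * ‖y‖

def AdmitsBetaNorm (Y : Type*) [SeminormedAddCommGroup Y] [NormedSpace ℝ Y] : Prop :=
  ∃ N : Y → ℝ, IsEquivNorm Y N ∧ ∀ t : ℝ, 0 < t → t ≤ 2 → 0 < rolewiczModN N t

def AdmitsBetaPNorm (Y : Type*) [SeminormedAddCommGroup Y] [NormedSpace ℝ Y] (p γ : ℝ) : Prop :=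
  ∃ N : Y → ℝ, IsEquivNorm Y N ∧
    ∀ t : ℝ, 0 < t → t ≤ 2 → (rolewiczSetN N t).Nonempty → γ * t ^ p ≤ rolewiczModN N t
def LipLargeDist {α β : Type*} (dα : α → α → ℝ) (dβ : β → β → ℝ) (f : α → β) : Prop :=
  ∀ s : ℝ, 0 < s → ∃ M : ℝ, ∀ a b : α, s ≤ dα a b → dβ (f a) (f b) ≤ M * dα a b
def CoarseQuotientMap {α β : Type*} (dα : α → α → ℝ) (dβ : β → β → ℝ) (f : α → β)
    (K : ℝ) : Prop :=
  Function.Surjective f ∧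
  (∀ t : ℝ, 0 < t → ∃ B : ℝ, ∀ a b : α, dα a b ≤ t → dβ (f a) (f b) ≤ B) ∧
  (∀ ε : ℝ, 0 < ε → ∃ δ : ℝ, 0 < δ ∧ ∀ (x : α) (y : β), dβ (f x) y ≤ ε →
    ∃ a : α, dα x a ≤ δ ∧ dβ (f a) y ≤ K)

def expMod1 {α β : Type*} (dα : α → α → ℝ) (dβ : β → β → ℝ) (f : α → β) : ℝ :=
  sSup {d : ℝ | ∃ a b : α, dα a b ≤ 1 ∧ d = dβ (f a) (f b)}

theorem fork_lemma {X : Type*} [NormedAddCommGroup X] [NormedSpace ℝ X] {p γ : ℝ} (hγ : 0 < γ)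
    (N : X → ℝ) (hN : IsEquivNorm X N)
    (hβ : ∀ t : ℝ, 0 < t → t ≤ 2 → (rolewiczSetN N t).Nonempty → γ * t ^ p ≤ rolewiczModN N t)
    (z x : X) (y : ℕ → X) (B t : ℝ) (hB : 0 < B) (ht : 0 < t)
    (h1 : N (x - z) ≤ B) (h2 : ∀ i, N (y i - z) ≤ B)
    (h3 : ∀ i j, i ≠ j → t * B ≤ N (y i - y j)) :
    ∃ i, N (x - y i) ≤ 2 * B * (1 - γ / 2 * t ^ p) := by
  obtain ⟨hadd, hsm, a, b, ha, hab, hnb⟩ := hN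
  have hnn : ∀ u, 0 ≤ N u := fun u => le_trans (by positivity) (hnb u).1
  have hneg : ∀ u, N (-u) = N u := fun u => by
    have := hsm (-1) u
    simpa using this
  have hsub : ∀ u v, N (u - v) ≤ N u + N v := fun u v => by
    have := hadd u (-v)
    rwa [hneg, ← sub_eq_add_neg] at this
  have hscale : ∀ u, N (B⁻¹ • u) = N u / B := fun u => by
    rw [hsm, abs_of_pos (inv_pos.2 hB)]; field_simp
  have ht2 : t ≤ 2 := by
    have e : y 0 - y 1 = (y 0 - z) - (y 1 - z) := by abel
    have h := h3 0 1 (by norm_num)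
    rw [e] at h
    have := hsub (y 0 - z) (y 1 - z)
    have := h2 0
    have := h2 1
    by_contra hc
    push Not at hc
    nlinarith
  have hbdd : BddAbove (rolewiczSetN N t) := by
    refine ⟨1, ?_⟩
    rintro s ⟨x', hx', y', hy', -, rfl⟩
    refine (ciInf_le ⟨0, ?_⟩ 0).trans ?_
    · rintro _ ⟨i, rfl⟩
      have := hnn (x' - y' i)
      simp only
      positivity
    · have := hsub x' (y' 0)
      have := hy' 0
      linarith
  have hmem : (⨅ i, N (B⁻¹ • (x - z) - B⁻¹ • (y i - z)) / 2) ∈ rolewiczSetN N t := by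
    refine ⟨B⁻¹ • (x - z), ?_, fun i => B⁻¹ • (y i - z), ?_, ?_, rfl⟩
    · rw [hscale, div_le_one hB]; exact h1
    · intro i
      simp only
      rw [hscale, div_le_one hB]; exact h2 i
    · intro i j hij
      simp only
      rw [← smul_sub, hscale, le_div_iff₀ hB]
      simpa using h3 i j hij
  have hmod := hβ t ht ht2 ⟨_, hmem⟩
  have hle := le_csSup hbdd hmem
  unfold rolewiczModN at hmod
  have htp : 0 < γ * t ^ p := mul_pos hγ (Real.rpow_pos_of_pos ht p)
  have hlt : (⨅ i, N (B⁻¹ • (x - z) - B⁻¹ • (y i - z)) / 2) < 1 - γ / 2 * t ^ p := by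
    linarith
  obtain ⟨i, hi⟩ := exists_lt_of_ciInf_lt hlt
  refine ⟨i, ?_⟩
  have e : B⁻¹ • (x - z) - B⁻¹ • (y i - z) = B⁻¹ • (x - y i) := by
    rw [← smul_sub]; congr 1; abel
  rw [e, hscale, div_div, div_lt_iff₀ (by positivity)] at hi
  linarith

theorem lp_disj {q : ℝ} (hq : 0 < q) (v w : lp (fun _ : ℕ => ℝ) (ENNReal.ofReal q))
    (h : ∀ j, v j = 0 ∨ w j = 0) : ‖v + w‖ ^ q = ‖v‖ ^ q + ‖w‖ ^ q := by
  have hr : (ENNReal.ofReal q).toReal = q := ENNReal.toReal_ofReal hq.le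
  have hq' : 0 < (ENNReal.ofReal q).toReal := by rwa [hr]
  have h1 := lp.hasSum_norm hq' v
  have h2 := lp.hasSum_norm hq' w
  have h3 := lp.hasSum_norm hq' (v + w)
  rw [hr] at h1 h2 h3
  have h4 := h1.add h2
  refine h3.unique ?_
  convert h4 using 2 with j
  rcases h j with h | h <;> simp [h, Real.zero_rpow hq.ne']

theorem exists_k {c e ε : ℝ} (hc : 0 < c) (he0 : 0 < e) (he : e < 1) (hε : 0 < ε) :
    ∃ k : ℕ, 0 < k ∧ 0 < 1 - c * (k : ℝ) ^ (-e) ∧ (1 - c * (k : ℝ) ^ (-e)) ^ k < ε := by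
  have hcast : Tendsto (fun k : ℕ => (k : ℝ)) atTop atTop := tendsto_natCast_atTop_atTop
  have t1 : Tendsto (fun k : ℕ => c * (k : ℝ) ^ (-e)) atTop (nhds (c * 0)) :=
    ((tendsto_rpow_neg_atTop he0).comp hcast).const_mul c
  rw [mul_zero] at t1
  have t2 : Tendsto (fun k : ℕ => Real.exp (-(c * (k : ℝ) ^ (1 - e)))) atTop (nhds 0) := by
    apply Real.tendsto_exp_neg_atTop_nhds_zero.comp
    exact ((tendsto_rpow_atTop (by linarith)).comp hcast).const_mul_atTop hc
  obtain ⟨k, h1, h2, h3⟩ := ((t1.eventually_lt_const one_pos).and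
    ((t2.eventually_lt_const hε).and (eventually_gt_atTop 0))).exists
  refine ⟨k, h3, by linarith, lt_of_le_of_lt ?_ h2⟩
  have hk : (0 : ℝ) < k := by exact_mod_cast h3
  have hle : 1 - c * (k : ℝ) ^ (-e) ≤ Real.exp (-(c * (k : ℝ) ^ (-e))) := by
    have := Real.add_one_le_exp (-(c * (k : ℝ) ^ (-e)))
    linarith
  calc (1 - c * (k : ℝ) ^ (-e)) ^ k ≤ (Real.exp (-(c * (k : ℝ) ^ (-e)))) ^ k :=
        pow_le_pow_left₀ (by linarith) hle k
    _ = Real.exp (-(c * (k : ℝ) ^ (1 - e))) := by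
        rw [← Real.exp_nat_mul]
        congr 1
        rw [sub_eq_add_neg, Real.rpow_add hk, Real.rpow_one]; ring

theorem co_lip {α E : Type*} [NormedAddCommGroup E] [NormedSpace ℝ E]
    (d : α → α → ℝ) (hd0 : ∀ a, d a a = 0) (hdt : ∀ a b c, d a c ≤ d a b + d b c)
    (F : α → E) (K δ : ℝ) (hK : 0 ≤ K)
    (hco : ∀ x y, ‖F x - y‖ ≤ 2 * K + 1 → ∃ a, d x a ≤ δ ∧ ‖F a - y‖ ≤ K)
    (n : ℕ) : ∀ x y y0, ‖F x - y0‖ ≤ K → ‖y0 - y‖ ≤ n * (K + 1) →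
      ∃ a, d x a ≤ n * δ ∧ ‖F a - y‖ ≤ K := by
  induction n with
  | zero =>
    intro x y y0 h1 h2
    refine ⟨x, by simp [hd0], ?_⟩
    have : y0 = y := by
      rw [← sub_eq_zero, ← norm_le_zero_iff]; simpa using h2
    rwa [← this]
  | succ n ih =>
    intro x y y0 h1 h2
    -- an intermediate point
    have hn : (0 : ℝ) < n + 1 := by positivity
    push_cast at h2
    set c : ℝ := 1 / (n + 1) with hc
    have hcpos : 0 < c := by positivity
    have hc1 : c * (n + 1) = 1 := by rw [hc]; field_simp
    set y1 : E := y0 - c • (y0 - y) with hy1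
    have e1 : ‖y0 - y1‖ ≤ K + 1 := by
      have : y0 - y1 = c • (y0 - y) := by rw [hy1]; abel
      rw [this, norm_smul, Real.norm_of_nonneg hcpos.le]
      calc c * ‖y0 - y‖ ≤ c * ((n + 1) * (K + 1)) := by gcongr
        _ = (c * (n + 1)) * (K + 1) := by ring
        _ = K + 1 := by rw [hc1, one_mul]
    have e2 : ‖y1 - y‖ ≤ n * (K + 1) := by
      have : y1 - y = (c * n) • (y0 - y) := by
        have : c * n = 1 - c := by linarith
        rw [this, hy1, sub_smul, one_smul]; abel
      rw [this, norm_smul, Real.norm_of_nonneg (by positivity)]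
      calc c * n * ‖y0 - y‖ ≤ c * n * ((n + 1) * (K + 1)) := by gcongr
        _ = (c * (n + 1)) * (n * (K + 1)) := by ring
        _ = n * (K + 1) := by rw [hc1, one_mul]
    obtain ⟨a, ha1, ha2⟩ := hco x y1 (by
      have := norm_sub_le_norm_sub_add_norm_sub (F x) y0 y1
      linarith)
    obtain ⟨b, hb1, hb2⟩ := ih a y y1 ha2 e2
    refine ⟨b, ?_, hb2⟩
    have := hdt x a b
    push_cast
    linarith

/-- The scale induction. -/
theorem scale_step {X : Type*} [NormedAddCommGroup X] [NormedSpace ℝ X] {p γ q : ℝ}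
    (hγ : 0 < γ) (hp : 1 < p) (hpq : p < q) [Fact (1 ≤ ENNReal.ofReal q)]
    (N : X → ℝ) (hN : IsEquivNorm X N)
    (hβ : ∀ t : ℝ, 0 < t → t ≤ 2 → (rolewiczSetN N t).Nonempty → γ * t ^ p ≤ rolewiczModN N t)
    {α : Type*} (ι : α → X) (F : α → lp (fun _ : ℕ => ℝ) (ENNReal.ofReal q))
    (K L C D τ R t θ : ℝ) (k : ℕ) (hK : 0 ≤ K) (hL : 0 < L) (hC : 0 ≤ C) (hD : 0 < D)
    (hτ : 0 < τ) (hτk : τ ^ q * k = 1) (hR : 0 < R) (hRτ : 2 * (2 * K + C) ≤ R * τ)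
    (ht : t = τ / (2 * L * D)) (hθ : θ = 1 - γ / 2 * t ^ p) (hθ0 : 0 < θ)
    (hF : ∀ a b, ‖F a - F b‖ ≤ L * N (ι a - ι b) + C)
    (hco : ∀ x y v, ‖F x - y‖ ≤ K → ‖v‖ ≤ 3 →
      ∃ a, N (ι x - ι a) ≤ D * R ∧ ‖F a - (y + R • v)‖ ≤ K) (s : ℕ) (hs : s ≤ k) :
    ∀ (x : α) (y v : lp (fun _ : ℕ => ℝ) (ENNReal.ofReal q)) (n : ℕ), ‖F x - y‖ ≤ K →
      (∀ j, n ≤ j → v j = 0) → ‖v‖ ^ q ≤ 3 - 2 * s * τ ^ q →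
      ∃ (a : α) (r : lp (fun _ : ℕ => ℝ) (ENNReal.ofReal q)) (m : ℕ),
        (∀ j, j < n → r j = 0) ∧ (∀ j, m ≤ j → r j = 0) ∧ ‖r‖ ≤ τ ∧
        N (ι x - ι a) ≤ 2 ^ s * (D * R * θ ^ s) ∧
        ‖F a - (y + (2 ^ s * R) • (v + r))‖ ≤ K := by
  have hq : 0 < q := by linarith
  have hneg : ∀ u, N (-u) = N u := fun u => by
    have := hN.2.1 (-1) u
    simpa using this
  have hsymm : ∀ u v, N (u - v) = N (v - u) := fun u v => by rw [← hneg, neg_sub]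
  have ht0 : 0 < t := by rw [ht]; positivity
  have hθ1 : θ ≤ 1 := by
    rw [hθ]
    have := Real.rpow_pos_of_pos ht0 p
    nlinarith
  induction s with
  | zero =>
    intro x y v n h1 h2 h3
    have hv : ‖v‖ ≤ 3 := by
      by_contra hc
      push Not at hc
      have h4 : (3 : ℝ) ^ q < ‖v‖ ^ q := Real.rpow_lt_rpow (by norm_num) hc hq
      have h5 : (3 : ℝ) ^ (1 : ℝ) ≤ 3 ^ q :=
        Real.rpow_le_rpow_of_exponent_le (by norm_num) (by linarith)
      simp at h3 h5
      linarith
    obtain ⟨a, ha1, ha2⟩ := hco x y v h1 hv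
    exact ⟨a, 0, 0, by simp, by simp, by simpa using hτ.le, by simpa using ha1,
      by simpa using ha2⟩
  | succ s ih =>
    intro x y v n h1 h2 h3
    replace ih := ih (by omega)
    have hτq : 0 < τ ^ q := Real.rpow_pos_of_pos hτ q
    push_cast at h3
    obtain ⟨z, r, m, hr1, hr2, hr3, hz1, hz2⟩ := ih x y v n h1 h2 (by linarith)
    -- the tips
    have tip : ∀ i : ℕ, ∃ (b : α) (r' : lp (fun _ : ℕ => ℝ) (ENNReal.ofReal q)) (m' : ℕ),
        (∀ j, j < n + m + i + 1 → r' j = 0) ∧ (∀ j, m' ≤ j → r' j = 0) ∧ ‖r'‖ ≤ τ ∧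
        N (ι z - ι b) ≤ 2 ^ s * (D * R * θ ^ s) ∧
        ‖F b - (y + (2 ^ s * R) • (v + r) +
          (2 ^ s * R) • ((v + (-r) + lp.single (ENNReal.ofReal q) (n + m + i) τ) + r'))‖ ≤ K := by
      intro i
      apply ih z _ _ _ hz2
      · intro j hj
        have : j ≠ n + m + i := by omega
        simp [h2 j (by omega), hr2 j (by omega), lp.single_apply_ne, this]
      · rw [lp_disj hq, lp_disj hq]
        · rw [norm_neg, lp.norm_single (by positivity), Real.norm_of_nonneg hτ.le]
          have := Real.rpow_le_rpow (norm_nonneg r) hr3 hq.le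
          linarith
        · intro j
          rcases lt_or_ge j n with h | h
          · right; simp [hr1 j h]
          · left; exact h2 j h
        · intro j
          by_cases h : j = n + m + i
          · left; simp [h2 j (by omega), hr2 j (by omega)]
          · right; simp [lp.single_apply_ne, h]
    choose b r' m' hb1 hb2 hb3 hb4 hb5 using tip
    have hBpos : 0 < 2 ^ s * (D * R * θ ^ s) := by positivity
    have hsep' : ∀ i j, i < j → t * (2 ^ s * (D * R * θ ^ s)) ≤ N (ι (b i) - ι (b j)) := by
      intro i j hij
      set T : ℕ → lp (fun _ : ℕ => ℝ) (ENNReal.ofReal q) := fun i =>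
        y + (2 ^ s * R) • (v + r) +
          (2 ^ s * R) • ((v + (-r) + lp.single (ENNReal.ofReal q) (n + m + i) τ) + r' i) with hT
      have hcoord : 2 ^ s * R * τ ≤ ‖T i - T j‖ := by
        have h := lp.norm_apply_le_norm (p := ENNReal.ofReal q) (by positivity) (T i - T j) (n + m + i)
        refine le_trans (le_of_eq ?_) h
        have hne : n + m + i ≠ n + m + j := by omega
        have e : (T i - T j) (n + m + i) = 2 ^ s * R * τ := by
          simp only [hT, lp.coeFn_sub, lp.coeFn_add, lp.coeFn_smul, lp.coeFn_neg, Pi.sub_apply,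
            Pi.add_apply, Pi.smul_apply, Pi.neg_apply, smul_eq_mul]
          rw [lp.single_apply_self, lp.single_apply_ne _ _ _ hne, hb1 i _ (by omega),
            hb1 j _ (by omega)]
          ring
        rw [e, Real.norm_of_nonneg (by positivity)]
      have h5 : ‖T i - T j‖ ≤ ‖F (b i) - F (b j)‖ + 2 * K := by
        have e : T i - T j = (F (b i) - F (b j)) - (F (b i) - T i) + (F (b j) - T j) := by abel
        have hA := norm_add_le ((F (b i) - F (b j)) - (F (b i) - T i)) (F (b j) - T j)
        have hB := norm_sub_le (F (b i) - F (b j)) (F (b i) - T i)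
        have hi : ‖F (b i) - T i‖ ≤ K := hb5 i
        have hj : ‖F (b j) - T j‖ ≤ K := hb5 j
        rw [e]
        linarith
      have h6 := hF (b i) (b j)
      have h7 : 2 * K + C ≤ 2 ^ s * R * τ / 2 := by
        have : (1 : ℝ) ≤ 2 ^ s := one_le_pow₀ (by norm_num)
        nlinarith [mul_pos hR hτ]
      have h8 : 2 ^ s * R * τ / 2 ≤ L * N (ι (b i) - ι (b j)) := by linarith
      have hts : θ ^ s ≤ 1 := pow_le_one₀ hθ0.le hθ1
      calc t * (2 ^ s * (D * R * θ ^ s)) ≤ t * (2 ^ s * (D * R * 1)) := by gcongr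
        _ = (2 ^ s * R * τ / 2) / L := by rw [ht]; field_simp
        _ ≤ N (ι (b i) - ι (b j)) := by rw [div_le_iff₀ hL]; linarith
    have hsep : ∀ i j, i ≠ j → t * (2 ^ s * (D * R * θ ^ s)) ≤ N (ι (b i) - ι (b j)) := by
      intro i j hij
      rcases lt_or_gt_of_ne hij with h | h
      · exact hsep' i j h
      · rw [hsymm]; exact hsep' j i h
    obtain ⟨i, hi⟩ := fork_lemma hγ N hN hβ (ι z) (ι x) (fun i => ι (b i)) _ t hBpos ht0 hz1
      (fun i => by rw [hsymm]; exact hb4 i) hsep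
    rw [← hθ] at hi
    refine ⟨b i, (2 : ℝ)⁻¹ • (lp.single (ENNReal.ofReal q) (n + m + i) τ + r' i),
      n + m + i + 1 + m' i, ?_, ?_, ?_, ?_, ?_⟩
    · intro j hj
      have hne : j ≠ n + m + i := by omega
      rw [lp.coeFn_smul, Pi.smul_apply, lp.coeFn_add, Pi.add_apply, hb1 i j (by omega),
        lp.single_apply_ne _ _ _ hne]
      simp
    · intro j hj
      have hne : j ≠ n + m + i := by omega
      rw [lp.coeFn_smul, Pi.smul_apply, lp.coeFn_add, Pi.add_apply, hb2 i j (by omega),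
        lp.single_apply_ne _ _ _ hne]
      simp
    · rw [norm_smul]
      have h9 := norm_add_le (lp.single (ENNReal.ofReal q) (n + m + i) τ) (r' i)
      rw [lp.norm_single (by positivity), Real.norm_of_nonneg hτ.le] at h9
      have := hb3 i
      rw [Real.norm_of_nonneg (by norm_num)]
      linarith
    · refine hi.trans (le_of_eq ?_)
      ring
    · convert hb5 i using 2
      congr 1
      rw [pow_succ]
      module

set_option maxHeartbeats 1000000 in
theorem no_map {X : Type*} [NormedAddCommGroup X] [NormedSpace ℝ X] {p γ q : ℝ}
    (hγ : 0 < γ) (hp : 1 < p) (hpq : p < q) [Fact (1 ≤ ENNReal.ofReal q)]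
    (hX : AdmitsBetaPNorm X p γ)
    {α : Type*} (ι : α → X) (F : α → lp (fun _ : ℕ => ℝ) (ENNReal.ofReal q))
    (hne : Nonempty α)
    (K L C δ : ℝ) (hK : 0 ≤ K) (hL : 0 < L) (hC : 0 ≤ C) (hδ : 0 < δ)
    (hF : ∀ a b, ‖F a - F b‖ ≤ L * dist (ι a) (ι b) + C)
    (hco : ∀ x y, ‖F x - y‖ ≤ 2 * K + 1 → ∃ a, dist (ι x) (ι a) ≤ δ ∧ ‖F a - y‖ ≤ K) :
    False := by
  obtain ⟨N, hN, hβ⟩ := hX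
  obtain ⟨a, b, ha, hab, hnb⟩ := hN.2.2
  have hb : 0 < b := by linarith
  have hq : 0 < q := by linarith
  set L' := L / a with hL'
  have hL'0 : 0 < L' := by positivity
  set D := 3 * δ * b with hD
  have hD0 : 0 < D := by positivity
  set c := γ / 2 * (1 / (2 * L' * D)) ^ p with hc
  have hc0 : 0 < c := by positivity
  obtain ⟨k, hk0, hk1, hk2⟩ := exists_k hc0 (show 0 < p / q by positivity)
    ((div_lt_one hq).2 hpq) (show 0 < 1 / (2 * L' * D) by positivity)
  have hk : (0 : ℝ) < k := by exact_mod_cast hk0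
  set τ : ℝ := (k : ℝ) ^ (-(1 / q)) with hτ
  have hτ0 : 0 < τ := Real.rpow_pos_of_pos hk _
  have hτk : τ ^ q * k = 1 := by
    rw [hτ, ← Real.rpow_mul hk.le]
    have : -(1 / q) * q = -1 := by field_simp
    rw [this, Real.rpow_neg_one]
    field_simp
  have hτ1 : τ ≤ 1 := by
    apply Real.rpow_le_one_of_one_le_of_nonpos
    · exact_mod_cast hk0
    · have : 0 < 1 / q := by positivity
      linarith
  have hτp : τ ^ p = (k : ℝ) ^ (-(p / q)) := by
    rw [hτ, ← Real.rpow_mul hk.le]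
    congr 1
    ring
  set t := τ / (2 * L' * D) with ht
  set θ := 1 - γ / 2 * t ^ p with hθ
  have hθe : θ = 1 - c * (k : ℝ) ^ (-(p / q)) := by
    rw [hθ, hc, ← hτp, ht, div_eq_mul_one_div τ, Real.mul_rpow hτ0.le (by positivity)]
    ring
  rw [← hθe] at hk1 hk2
  obtain ⟨n, hn⟩ := exists_nat_gt (2 * (2 * K + C) / τ)
  rw [div_lt_iff₀ hτ0] at hn
  have hn0 : (0 : ℝ) < n := by
    by_contra h
    push Not at h
    nlinarith
  have hcoL := co_lip (fun a b => dist (ι a) (ι b)) (fun a => dist_self _)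
    (fun a b c => dist_triangle _ _ _) F K δ hK hco
  have key := scale_step hγ hp hpq N hN hβ ι F K L' C D τ n t θ k hK hL'0 hC hD0 hτ0 hτk hn0
    hn.le rfl rfl hk1 (by
      intro u v
      refine (hF u v).trans ?_
      have h := (hnb (ι u - ι v)).1
      rw [dist_eq_norm, hL', div_mul_eq_mul_div]
      gcongr
      rw [le_div_iff₀ ha]
      nlinarith) (by
      intro x y v h1 h2
      obtain ⟨w, hw1, hw2⟩ := hcoL (3 * n) x (y + (n : ℝ) • v) y h1 (by
        rw [sub_add_cancel_left, norm_neg, norm_smul, Real.norm_of_nonneg hn0.le]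
        push_cast
        nlinarith)
      refine ⟨w, ?_, hw2⟩
      refine (hnb _).2.trans ?_
      rw [← dist_eq_norm]
      push_cast at hw1
      rw [hD]
      nlinarith) k le_rfl
  obtain ⟨x⟩ := hne
  obtain ⟨w, r, m, hr1, -, -, hw1, hw2⟩ := key x (F x) (lp.single (ENNReal.ofReal q) 0 1) 1
    (by simpa using hK) (by
      intro j hj
      have : j ≠ 0 := by omega
      simp [lp.single_apply_ne, this]) (by
      rw [lp.norm_single (by positivity)]
      simp
      nlinarith)
  set u := lp.single (E := fun _ : ℕ => ℝ) (ENNReal.ofReal q) 0 (1 : ℝ) + r with hu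
  have hu1 : 1 ≤ ‖u‖ := by
    have h := lp.norm_apply_le_norm (p := ENNReal.ofReal q) (by positivity) u 0
    refine le_trans (le_of_eq ?_) h
    simp [hu, hr1 0 (by norm_num)]
  have hFx : ‖F x - F w‖ ≤ L' * N (ι x - ι w) + C := by
    refine (hF x w).trans ?_
    have h := (hnb (ι x - ι w)).1
    rw [dist_eq_norm, hL', div_mul_eq_mul_div]
    gcongr
    rw [le_div_iff₀ ha]
    nlinarith
  have hbig : (2 ^ k * n : ℝ) ≤ ‖F x - F w‖ + K := by
    generalize F w = A at hw2 ⊢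
    generalize F x = A' at hw2 ⊢
    have e : (2 ^ k * n : ℝ) • u = (A - A') - (A - (A' + (2 ^ k * n : ℝ) • u)) := by abel
    have h1 := norm_sub_le (A - A') (A - (A' + (2 ^ k * n : ℝ) • u))
    rw [← e, norm_smul, Real.norm_of_nonneg (by positivity), norm_sub_rev A A'] at h1
    have h2 : (2 ^ k * n : ℝ) ≤ 2 ^ k * n * ‖u‖ := le_mul_of_one_le_right (by positivity) hu1
    linarith
  have hP : (1 : ℝ) ≤ 2 ^ k := one_le_pow₀ (by norm_num)
  have hθs : L' * (2 ^ k * (D * n * θ ^ k)) < 2 ^ k * n / 2 := by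
    rw [lt_div_iff₀ (by positivity)] at hk2
    have : 0 < (2 : ℝ) ^ k * n := by positivity
    nlinarith
  have h3 : L' * N (ι x - ι w) ≤ L' * (2 ^ k * (D * n * θ ^ k)) := by gcongr
  have h4 : K + C ≤ 2 ^ k * n / 2 := by
    have : (n : ℝ) * τ ≤ n := mul_le_of_le_one_right hn0.le hτ1
    have : (n : ℝ) ≤ 2 ^ k * n := le_mul_of_one_le_left hn0.le hP
    linarith
  linarith

theorem coarse_lip {α β : Type*} (dα : α → α → ℝ) (dβ : β → β → ℝ) (h0 : ∀ a b, 0 ≤ dα a b)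
    (f : α → β)
    (hc : ∀ t : ℝ, 0 < t → ∃ B : ℝ, ∀ a b : α, dα a b ≤ t → dβ (f a) (f b) ≤ B)
    (hl : LipLargeDist dα dβ f) :
    ∃ L C : ℝ, 0 < L ∧ 0 ≤ C ∧ ∀ a b, dβ (f a) (f b) ≤ L * dα a b + C := by
  obtain ⟨B, hB⟩ := hc 1 one_pos
  obtain ⟨M, hM⟩ := hl 1 one_pos
  refine ⟨|M| + 1, |B|, by positivity, by positivity, fun a b => ?_⟩
  have h1 := h0 a b
  have h2 := abs_nonneg B
  have h3 := le_abs_self M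
  have h4 := le_abs_self B
  have h6 : 0 ≤ |M| * dα a b := by positivity
  rcases le_total (dα a b) 1 with h | h
  · have := hB a b h
    linarith
  · have := hM a b h
    have := mul_le_mul_of_nonneg_right h3 h1
    linarith

/-- Theorem 4.16: if `X` admits an equivalent norm with property
(β_p) and a Banach space `Y` is a coarse quotient of a subset of `X` via a map
Lipschitz for large distances, then for `q > p` the space `ℓ_q` is not a coarse
quotient of a subset of `Y` via a map Lipschitz for large distances. -/
theorem beta_p_coarse_subquotient
    (p γ : ℝ) (hp : 1 < p) (hγ : 0 < γ)
    (X : Type*) [NormedAddCommGroup X] [NormedSpace ℝ X] [CompleteSpace X]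
    (hX : AdmitsBetaPNorm X p γ)
    (Y : Type*) [NormedAddCommGroup Y] [NormedSpace ℝ Y] [CompleteSpace Y]
    (hY : ∃ (Z : Set X) (f : Z → Y) (K : ℝ), 0 ≤ K ∧
      CoarseQuotientMap (fun a b : Z => dist a.1 b.1) (fun a b : Y => dist a b) f K ∧
      LipLargeDist (fun a b : Z => dist a.1 b.1) (fun a b : Y => dist a b) f) :
    ∀ q : ℝ, p < q →
      ¬ ∃ (W : Set Y) (g : W → lp (fun _ : ℕ => ℝ) (ENNReal.ofReal q)) (K' : ℝ), 0 ≤ K' ∧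
        CoarseQuotientMap (fun a b : W => dist a.1 b.1)
          (fun a b : lp (fun _ : ℕ => ℝ) (ENNReal.ofReal q) => ‖a - b‖) g K' ∧
        LipLargeDist (fun a b : W => dist a.1 b.1)
          (fun a b : lp (fun _ : ℕ => ℝ) (ENNReal.ofReal q) => ‖a - b‖) g := by
  rintro q hpq ⟨W, g, K', hK', ⟨gs, gc, gq⟩, gl⟩
  obtain ⟨Z, f, K, hK, ⟨fs, fc, fq⟩, fl⟩ := hY
  haveI : Fact (1 ≤ ENNReal.ofReal q) := ⟨by
    rw [← ENNReal.ofReal_one]; exact ENNReal.ofReal_le_ofReal (by linarith)⟩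
  obtain ⟨Lf, Cf, hLf, hCf, hf⟩ := coarse_lip _ _ (fun a b => dist_nonneg) f fc fl
  obtain ⟨Lg, Cg, hLg, hCg, hg⟩ := coarse_lip _ _ (fun a b => dist_nonneg) g gc gl
  set K2 : ℝ := K' + (Lg * (2 * K) + Cg) with hK2
  have hK20 : 0 ≤ K2 := by positivity
  obtain ⟨δ1, hδ1, hq1⟩ := gq (2 * K2 + 1) (by positivity)
  obtain ⟨δ2, hδ2, hq2⟩ := fq (K + δ1) (by positivity)
  refine no_map (α := {zw : Z × W // dist (f zw.1) zw.2.1 ≤ K}) hγ hp hpq hX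
    (fun a => a.1.1.1) (fun a => g a.1.2) ?_ K2 (Lg * Lf) (Lg * (Cf + 2 * K) + Cg) δ2 hK20
    (by positivity) (by positivity) hδ2 ?_ ?_
  · obtain ⟨w, -⟩ := gs 0
    obtain ⟨z, hz⟩ := fs w.1
    exact ⟨⟨(z, w), by simpa [hz] using hK⟩⟩
  · rintro ⟨⟨z, w⟩, h⟩ ⟨⟨z', w'⟩, h'⟩
    simp only at h h' ⊢
    have h1 := hg w w'
    have h2 := hf z z'
    have h3 : dist w.1 w'.1 ≤ K + dist (f z) (f z') + K := by
      have := dist_triangle4 w.1 (f z) (f z') w'.1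
      rw [dist_comm w.1 (f z)] at this
      linarith
    have h4 : Lg * dist w.1 w'.1 ≤ Lg * (K + (Lf * dist z.1 z'.1 + Cf) + K) := by
      gcongr
      linarith
    linarith
  · rintro ⟨⟨z, w⟩, h⟩ y hy
    simp only at h hy
    obtain ⟨w', hw1, hw2⟩ := hq1 w y hy
    simp only at hw1 hw2
    obtain ⟨a, ha1, ha2⟩ := hq2 z w'.1 (by
      have := dist_triangle (f z) w.1 w'.1
      simp only
      linarith)
    refine ⟨⟨(a, w'), ha2⟩, ha1, ?_⟩
    simp only
    have : 0 ≤ Lg * (2 * K) + Cg := by positivity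
    linarith

end
end
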